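/- arXiv:2108.09321 — 3 statements merged into one kernel-verified Lean document; each statement's English description precedes it below -/
import Mathlib

section
/- Let f be bistable (assumption (A2)) with interior zero u*, satisfying also (A4), and let c* be the heteroclinic speed. For c > c*, let P⁻_c be the unstable-manifold solution of dP/dU = −c − f(U)/P with P⁻_c(0) = 0, P⁻_c > 0 for U > 0, let P⁺_c be the stable-manifold solution with P⁺_c(1) = 0, P⁺_c > 0 for U < 1, and let u⁻(c) ∈ (u*,1) and u⁺(c) ∈ (u*,1) be the points where P⁻_c and P⁺_c respectively intersect the curve P = √(U·f(U)). Then there exists a constant α > 0 such that u⁻(c) − u* ≤ α/c² and 1 − u⁺(c) ≤ α/c² for all sufficiently large c; in particular u⁻(c) → u* and u⁺(c) → 1 as c → +∞. Moreover the minimum control cost E(c) = (3/2)∫_{u⁻(c)}^{u⁺(c)} √(f(u))/(u√u) du + (1/2)∫_{u⁻(c)}^{u⁺(c)} f'(u)/√(u·f(u)) du + c·ln(u⁺(c)/u⁻(c)) satisfies E(c) = c·|ln u*| + ∫_{u*}^{1} [ (3√(f(u)))/(2u√u) + f'(u)/(2√(u·f(u))) ] du + e(c), where |e(c)| ≤ K/c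 for some constant K and all large c. -/
open Set Filter

/-- A traveling profile of speed `c` for `u_t = f(u) + u_xx`. -/
def IsTravelingProfile (f : ℝ → ℝ) (c : ℝ) (U : ℝ → ℝ) : Prop :=
  ContDiff ℝ 2 U ∧ (∀ x, U x ∈ Icc (0:ℝ) 1) ∧
  (∀ x, deriv (deriv U) x + c * deriv U x + f (U x) = 0) ∧
  Tendsto U atBot (nhds 0) ∧ Tendsto U atTop (nhds 1)

theorem aux_lip (f : ℝ → ℝ) (hf : ContDiff ℝ 2 f) :
    ∃ L > (0:ℝ), ∀ x ∈ Icc (0:ℝ) 1, ∀ y ∈ Icc (0:ℝ) 1, |f y - f x| ≤ L * |y - x| := by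
  have hc : Continuous (deriv f) := hf.continuous_deriv (by norm_num)
  obtain ⟨C, hC⟩ := (isCompact_Icc (a := (0:ℝ)) (b := 1)).exists_bound_of_continuousOn hc.continuousOn
  refine ⟨max C 1, by positivity, fun x hx y hy => ?_⟩
  have hd : Differentiable ℝ f := hf.differentiable (by norm_num)
  have := Convex.norm_image_sub_le_of_norm_deriv_le (f := f) (C := max C 1) (s := Icc (0:ℝ) 1)
    (fun z _ => hd z) (fun z hz => (hC z hz).trans (le_max_left _ _)) (convex_Icc 0 1) hx hy
  simpa using this

theorem aux_pos (f : ℝ → ℝ) (hf : ContDiff ℝ 2 f) (a : ℝ) (ha : a ∈ Ioo (0:ℝ) 1)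
    (hfz : ∀ u ∈ Ioo (0:ℝ) 1, f u = 0 ↔ u = a) (hf'u : 0 < deriv f a) :
    ∀ u ∈ Ioo a 1, 0 < f u := by
  have hd : Differentiable ℝ f := hf.differentiable (by norm_num)
  have hfa : f a = 0 := (hfz a ha).2 rfl
  have hc : Continuous (deriv f) := hf.continuous_deriv (by norm_num)
  intro u hu
  by_contra hneg
  push Not at hneg
  have hev : ∀ᶠ x in nhds a, 0 < deriv f x := hc.continuousAt.eventually (lt_mem_nhds hf'u)
  obtain ⟨ε, hε, hball⟩ := Metric.eventually_nhds_iff.1 hev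
  set p := min u (a + ε / 2) with hp
  have hap : a < p := lt_min hu.1 (by linarith)
  have hmono : StrictMonoOn f (Icc a p) := by
    apply strictMonoOn_of_deriv_pos (convex_Icc _ _) hd.continuous.continuousOn
    intro x hx
    rw [interior_Icc] at hx
    apply hball
    have : p ≤ a + ε / 2 := min_le_right _ _
    rw [Real.dist_eq, abs_lt]
    constructor <;> linarith [hx.1, hx.2]
  have hfp : 0 < f p := by
    have := hmono (left_mem_Icc.2 hap.le) (right_mem_Icc.2 hap.le) hap
    rwa [hfa] at this
  have hpu : p ≤ u := min_le_left _ _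
  obtain ⟨z, hz, hz0⟩ := intermediate_value_Icc' hpu hd.continuous.continuousOn ⟨hneg, hfp.le⟩
  have := (hfz z ⟨by linarith [hz.1, ha.1], by linarith [hz.2, hu.2]⟩).1 hz0
  linarith [hz.1]

theorem aux_anti (P P' : ℝ → ℝ) (a b k : ℝ) (hab : a ≤ b) (hc : ContinuousOn P (Icc a b))
    (hd : ∀ x ∈ Ioo a b, HasDerivAt P (P' x) x) (hk : ∀ x ∈ Ioo a b, P' x ≤ k) :
    P b ≤ P a + k * (b - a) := by
  have h : AntitoneOn (fun x => P x - k * x) (Icc a b) := by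
    apply antitoneOn_of_deriv_nonpos (convex_Icc _ _)
    · exact hc.sub (by fun_prop)
    · rw [interior_Icc]
      intro x hx
      exact ((hd x hx).differentiableAt.sub (by fun_prop)).differentiableWithinAt
    · rw [interior_Icc]
      intro x hx
      have h1 : HasDerivAt (fun x => P x - k * x) (P' x - k * 1) x :=
        (hd x hx).sub ((hasDerivAt_id x).const_mul k)
      rw [h1.deriv]
      linarith [hk x hx]
  have := h (left_mem_Icc.2 hab) (right_mem_Icc.2 hab) hab
  simp only at this
  linarith

theorem aux_upper (f P : ℝ → ℝ) (L c a : ℝ) (hL : 0 < L) (hc : 0 < c) (ha : 0 < a)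
    (hP : ContinuousOn P (Icc 0 a)) (h0 : P 0 = 0)
    (hfl : ∀ u ∈ Icc 0 a, -(L * u) ≤ f u)
    (hd : ∀ u ∈ Ioo (0:ℝ) a, 0 < P u ∧ HasDerivAt P (-c - f u / P u) u) :
    P a ≤ L / c * a := by
  by_contra hcon
  push Not at hcon
  have hcg : ContinuousOn (fun x => P x - L / c * x) (Icc 0 a) := hP.sub (by fun_prop)
  have hcl : IsClosed (Icc 0 a ∩ (fun x => P x - L / c * x) ⁻¹' Iic 0) :=
    hcg.preimage_isClosed_of_isClosed isClosed_Icc isClosed_Iic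
  have hcomp : IsCompact (Icc 0 a ∩ (fun x => P x - L / c * x) ⁻¹' Iic 0) :=
    isCompact_Icc.of_isClosed_subset hcl inter_subset_left
  obtain ⟨s, hs, hmax⟩ := hcomp.exists_isGreatest
    ⟨0, left_mem_Icc.2 ha.le, by simp [h0]⟩
  have hs2 : P s - L / c * s ≤ 0 := hs.2
  have hs1 := hs.1
  have := aux_anti P (fun u => -c - f u / P u) s a 0 hs1.2
    (hP.mono (Icc_subset_Icc_left hs1.1))
    (fun x hx => (hd x ⟨lt_of_le_of_lt hs1.1 hx.1, hx.2⟩).2)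
    (fun x hx => by
      have hx0 : 0 < x := lt_of_le_of_lt hs1.1 hx.1
      have hpos := (hd x ⟨hx0, hx.2⟩).1
      have hgt : L / c * x < P x := by
        by_contra h
        push Not at h
        have : x ≤ s := hmax ⟨⟨hx0.le, hx.2.le⟩, by simpa using h⟩
        linarith [hx.1]
      have h1 : L * x ≤ c * P x := by
        have : c * (L / c * x) = L * x := by field_simp
        nlinarith
      have h2 := hfl x ⟨hx0.le, hx.2.le⟩
      have : -c ≤ f x / P x := by
        rw [le_div_iff₀ hpos]; linarith
      try simp only
      linarith)
  have h3 : L / c * s ≤ L / c * a := by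
    apply mul_le_mul_of_nonneg_left hs1.2; positivity
  linarith

theorem aux_int (f : ℝ → ℝ) (hf : ContDiff ℝ 2 f) (a : ℝ) (ha : a ∈ Ioo (0:ℝ) 1)
    (hpos : ∀ u ∈ Ioo a 1, 0 < f u) (hf'u : 0 < deriv f a) (hf'1 : deriv f 1 < 0) :
    IntervalIntegrable (fun u => deriv f u / Real.sqrt (u * f u)) MeasureTheory.volume a 1 := by
  have hd : Differentiable ℝ f := hf.differentiable (by norm_num)
  have hc : Continuous (deriv f) := hf.continuous_deriv (by norm_num)
  have hS : ContinuousOn (fun u => Real.sqrt (f u)) univ :=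
    (Real.continuous_sqrt.comp hd.continuous).continuousOn
  have hSd : ∀ u ∈ Ioo a 1, HasDerivAt (fun u => Real.sqrt (f u))
      (deriv f u / (2 * Real.sqrt (f u))) u :=
    fun u hu => (hd u).hasDerivAt.sqrt (hpos u hu).ne'
  obtain ⟨ε, hε, hball⟩ := Metric.eventually_nhds_iff.1
    (hc.continuousAt.eventually (lt_mem_nhds hf'u))
  obtain ⟨ε', hε', hball'⟩ := Metric.eventually_nhds_iff.1
    (hc.continuousAt.eventually (gt_mem_nhds hf'1))
  have ha1 := ha.2
  set m := (a + 1) / 2 with hm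
  set p := min m (a + ε / 2) with hp
  set q := max m (1 - ε' / 2) with hq
  have hap : a < p := lt_min (by linarith) (by linarith)
  have hpm : p ≤ m := min_le_left _ _
  have hpe : p ≤ a + ε / 2 := min_le_right _ _
  have hmq : m ≤ q := le_max_left _ _
  have hqe : 1 - ε' / 2 ≤ q := le_max_right _ _
  have hq1 : q < 1 := max_lt (by linarith) (by linarith)
  have i1 : IntervalIntegrable (fun u => deriv f u / (2 * Real.sqrt (f u)))
      MeasureTheory.volume a p := by
    apply intervalIntegral.intervalIntegrable_deriv_of_nonneg (g := fun u => Real.sqrt (f u))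
      (hS.mono (subset_univ _))
    · intro x hx
      rw [min_eq_left hap.le, max_eq_right hap.le] at hx
      exact hSd x ⟨hx.1, by linarith [hx.2]⟩
    · intro x hx
      rw [min_eq_left hap.le, max_eq_right hap.le] at hx
      have : 0 < deriv f x := hball (by
        rw [Real.dist_eq, abs_lt]
        constructor <;> linarith [hx.1, hx.2])
      positivity
  have i3 : IntervalIntegrable (fun u => deriv f u / (2 * Real.sqrt (f u)))
      MeasureTheory.volume q 1 := by
    have : IntervalIntegrable (fun u => -(deriv f u / (2 * Real.sqrt (f u))))
      MeasureTheory.volume q 1 := by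
      apply intervalIntegral.intervalIntegrable_deriv_of_nonneg (g := fun u => -Real.sqrt (f u))
        (hS.mono (subset_univ _)).neg
      · intro x hx
        rw [min_eq_left hq1.le, max_eq_right hq1.le] at hx
        exact (hSd x ⟨by linarith [hx.1], hx.2⟩).neg
      · intro x hx
        rw [min_eq_left hq1.le, max_eq_right hq1.le] at hx
        have : deriv f x < 0 := hball' (by
          rw [Real.dist_eq, abs_lt]
          constructor <;> linarith [hx.1, hx.2])
        rw [← neg_div]
        have h2 : 0 < -deriv f x := by linarith
        positivity
    simpa [Pi.neg_def] using this.neg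
  have i2 : IntervalIntegrable (fun u => deriv f u / (2 * Real.sqrt (f u)))
      MeasureTheory.volume p q := by
    apply ContinuousOn.intervalIntegrable
    rw [uIcc_of_le (by linarith)]
    apply ContinuousOn.div hc.continuousOn ((hS.mono (subset_univ _)).const_smul (2:ℝ))
    intro x hx
    have : 0 < f x := hpos x ⟨by linarith [hx.1], by linarith [hx.2]⟩
    have h2 : 0 < 2 * Real.sqrt (f x) := by positivity
    exact h2.ne'
  have i := (i1.trans i2).trans i3
  have j := i.mul_continuousOn (g := fun u => 2 / Real.sqrt u) (by
    rw [uIcc_of_le ha1.le]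
    apply ContinuousOn.div continuousOn_const Real.continuous_sqrt.continuousOn
    intro x hx
    have : 0 < x := by linarith [hx.1, ha.1]
    positivity)
  refine j.congr ?_
  intro x hx
  rw [uIoc_of_le ha1.le] at hx
  have hx0 : 0 < x := by linarith [hx.1, ha.1]
  try simp only
  rw [Real.sqrt_mul hx0.le, div_mul_div_comm, mul_assoc 2, mul_comm (deriv f x) 2,
    mul_div_mul_left _ _ two_ne_zero, mul_comm (Real.sqrt x)]

theorem aux_cont (f : ℝ → ℝ) (hf : Continuous f) (a : ℝ) (ha : 0 < a) :
    ContinuousOn (fun u => Real.sqrt (f u) / (u * Real.sqrt u)) (Icc a 1) := by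
  apply ContinuousOn.div (Real.continuous_sqrt.comp hf).continuousOn
    (continuousOn_id.mul Real.continuous_sqrt.continuousOn)
  intro x hx
  have : 0 < x := by linarith [hx.1]
  have h2 : 0 < x * Real.sqrt x := by positivity
  exact h2.ne'

theorem aux_ftc (f : ℝ → ℝ) (hf : ContDiff ℝ 2 f) (a : ℝ) (ha : a ∈ Ioo (0:ℝ) 1)
    (hpos : ∀ u ∈ Ioo a 1, 0 < f u) (hf'u : 0 < deriv f a) (hf'1 : deriv f 1 < 0)
    (x y : ℝ) (hax : a ≤ x) (hxy : x ≤ y) (hy1 : y ≤ 1) :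
    ∫ u in x..y, deriv f u / Real.sqrt (u * f u) =
      2 * Real.sqrt (f y / y) - 2 * Real.sqrt (f x / x)
        + ∫ u in x..y, Real.sqrt (f u) / (u * Real.sqrt u) := by
  have hd : Differentiable ℝ f := hf.differentiable (by norm_num)
  have hsub : Icc x y ⊆ Icc a 1 := Icc_subset_Icc hax hy1
  have i1 : IntervalIntegrable (fun u => deriv f u / Real.sqrt (u * f u))
      MeasureTheory.volume x y := by
    apply (aux_int f hf a ha hpos hf'u hf'1).mono_set
    rwa [uIcc_of_le hxy, uIcc_of_le ha.2.le]
  have i2 : IntervalIntegrable (fun u => Real.sqrt (f u) / (u * Real.sqrt u))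
      MeasureTheory.volume x y := by
    apply ContinuousOn.intervalIntegrable
    rw [uIcc_of_le hxy]
    exact (aux_cont f hd.continuous a ha.1).mono hsub
  rw [← sub_eq_iff_eq_add, ← intervalIntegral.integral_sub i1 i2]
  apply intervalIntegral.integral_eq_sub_of_hasDerivAt_of_le hxy
    (f := fun u => 2 * Real.sqrt (f u / u))
  · apply ContinuousOn.mul continuousOn_const
    apply Real.continuous_sqrt.comp_continuousOn
    apply hd.continuous.continuousOn.div continuousOn_id
    intro z hz
    try simp only [id]
    linarith [hz.1, ha.1]
  · intro z hz
    have hz0 : 0 < z := by linarith [hz.1, ha.1]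
    have hfz : 0 < f z := hpos z ⟨by linarith [hz.1], by linarith [hz.2]⟩
    have h := (((hd z).hasDerivAt.div (hasDerivAt_id z) hz0.ne').sqrt
      (by simp only [Pi.div_apply, id]; positivity)).const_mul 2
    refine HasDerivAt.congr_deriv h ?_
    try simp only [Pi.div_apply, id]
    rw [Real.sqrt_mul hz0.le, Real.sqrt_div hfz.le]
    obtain ⟨s, hs, hs2⟩ : ∃ s, 0 < s ∧ s = Real.sqrt (f z) := ⟨_, Real.sqrt_pos.2 hfz, rfl⟩
    obtain ⟨t, ht, ht2⟩ : ∃ t, 0 < t ∧ t = Real.sqrt z := ⟨_, Real.sqrt_pos.2 hz0, rfl⟩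
    have e1 : f z = s ^ 2 := by rw [hs2, Real.sq_sqrt hfz.le]
    have e2 : z = t ^ 2 := by rw [ht2, Real.sq_sqrt hz0.le]
    rw [← hs2, ← ht2, e1]
    generalize deriv f z = D
    rw [e2]
    field_simp
  · exact i1.sub i2


/-- asymptotic behavior of the switching points `u⁻(c), u⁺(c)` and of the
minimum cost `E(c)` as `c → +∞`:
`u⁻(c) - u* ≤ α/c²`, `1 - u⁺(c) ≤ α/c²`, hence `u⁻(c) → u*`, `u⁺(c) → 1`, and
`E(c) = c|ln u*| + ∫_{u*}^1 [3√f/(2u√u) + f'/(2√(uf))] du + O(1/c)`. -/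
theorem asymptotic_cost_large_speed
    (f : ℝ → ℝ) (hf : ContDiff ℝ 2 f) (hf0 : f 0 = 0) (hf1 : f 1 = 0)
    (hf'0 : deriv f 0 < 0) (hf'1 : deriv f 1 < 0)
    (ustar : ℝ) (hustar : ustar ∈ Ioo (0:ℝ) 1)
    (hfz : ∀ u ∈ Ioo (0:ℝ) 1, f u = 0 ↔ u = ustar)
    (hf'u : 0 < deriv f ustar)
    (hA4 : ∀ u ∈ Icc ustar (1:ℝ),
      (4 - 2 * Real.sqrt 3) * deriv f u + 2 * u * deriv (deriv f) u ≤ 0)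
    (cstar : ℝ) (hchar : ∀ c', (∃ U, IsTravelingProfile f c' U) ↔ c' = cstar)
    (Pm Pp : ℝ → ℝ → ℝ) (um up : ℝ → ℝ)
    (hm : ∀ c, cstar < c →
      um c ∈ Ioo ustar 1 ∧
      ContinuousOn (Pm c) (Icc 0 (um c)) ∧ Pm c 0 = 0 ∧
      (∀ u ∈ Ioo (0:ℝ) (um c), 0 < Pm c u ∧ HasDerivAt (Pm c) (-c - f u / Pm c u) u) ∧
      Pm c (um c) = Real.sqrt (um c * f (um c)))
    (hp : ∀ c, cstar < c →
      up c ∈ Ioo ustar 1 ∧ um c < up c ∧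
      ContinuousOn (Pp c) (Icc (up c) 1) ∧ Pp c 1 = 0 ∧
      (∀ u ∈ Ioo (up c) (1:ℝ), 0 < Pp c u ∧ HasDerivAt (Pp c) (-c - f u / Pp c u) u) ∧
      Pp c (up c) = Real.sqrt (up c * f (up c))) :
    (∃ α > (0:ℝ), ∃ c₀ : ℝ, ∀ c ≥ c₀,
      um c - ustar ≤ α / c ^ 2 ∧ 1 - up c ≤ α / c ^ 2) ∧
    Tendsto um atTop (nhds ustar) ∧ Tendsto up atTop (nhds 1) ∧
    (∃ K : ℝ, ∃ c₁ : ℝ, ∀ c ≥ c₁,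
      |((3 / 2) * ∫ u in um c..up c, Real.sqrt (f u) / (u * Real.sqrt u))
        + ((1 / 2) * ∫ u in um c..up c, deriv f u / Real.sqrt (u * f u))
        + c * Real.log (up c / um c)
        - (c * |Real.log ustar|
            + ∫ u in ustar..(1:ℝ),
                (3 * Real.sqrt (f u) / (2 * u * Real.sqrt u)
                  + deriv f u / (2 * Real.sqrt (u * f u))))| ≤ K / c) := by
  obtain ⟨L, hL, hlip⟩ := aux_lip f hf
  have hd : Differentiable ℝ f := hf.differentiable (by norm_num)
  have hpos := aux_pos f hf ustar hustar hfz hf'u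
  have hs0 := hustar.1
  have hs1 := hustar.2
  have hfs : f ustar = 0 := (hfz _ hustar).2 rfl
  have key : ∀ c ≥ max 1 (cstar + 1), um c - ustar ≤ L / c ^ 2 ∧ 1 - up c ≤ L / c ^ 2 := by
    intro c hc
    have hc1 : 1 ≤ c := (le_max_left _ _).trans hc
    have hcs : cstar < c := by linarith [(le_max_right 1 (cstar + 1)).trans hc]
    have hc0 : 0 < c := by linarith
    constructor
    · obtain ⟨⟨h1, h2⟩, h3, h4, h5, h6⟩ := hm c hcs
      have a1 := aux_upper f (Pm c) L c ustar hL hc0 hs0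
        (h3.mono (Icc_subset_Icc_right h1.le)) h4
        (fun u hu => by
          have := hlip 0 (by simp) u ⟨hu.1, by linarith [hu.2]⟩
          rw [hf0, sub_zero, sub_zero, abs_of_nonneg hu.1] at this
          linarith [(abs_le.1 this).1])
        (fun u hu => h5 u ⟨hu.1, hu.2.trans h1⟩)
      have a2 := aux_anti (Pm c) (fun u => -c - f u / Pm c u) ustar (um c) (-c) h1.le
        (h3.mono (Icc_subset_Icc_left hs0.le))
        (fun u hu => (h5 u ⟨hs0.trans hu.1, hu.2⟩).2)
        (fun u hu => by
          have q1 := (h5 u ⟨hs0.trans hu.1, hu.2⟩).1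
          have q2 := hpos u ⟨hu.1, hu.2.trans h2⟩
          have : 0 < f u / Pm c u := by positivity
          try simp only
          linarith)
      have a3 : 0 ≤ Pm c (um c) := by rw [h6]; positivity
      have a4 : L / c * ustar ≤ L / c := by
        have : 0 < L / c := by positivity
        nlinarith
      have a5 : c * (um c - ustar) ≤ L / c := by linarith
      rw [le_div_iff₀ (by positivity)]
      rw [le_div_iff₀ hc0] at a5
      nlinarith
    · obtain ⟨⟨h1, h2⟩, -, h3, h4, h5, h6⟩ := hp c hcs
      have a2 := aux_anti (Pp c) (fun u => -c - f u / Pp c u) (up c) 1 (-c) h2.le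
        h3
        (fun u hu => (h5 u hu).2)
        (fun u hu => by
          have q1 := (h5 u hu).1
          have q2 := hpos u ⟨h1.trans hu.1, hu.2⟩
          have : 0 < f u / Pp c u := by positivity
          try simp only
          linarith)
      rw [h4, h6] at a2
      have q2 := hpos _ ⟨h1, h2⟩
      have hup0 : 0 < up c := hs0.trans h1
      have a3 : c * (1 - up c) ≤ Real.sqrt (up c * f (up c)) := by linarith
      have a4 : (c * (1 - up c)) ^ 2 ≤ up c * f (up c) := by
        rw [← Real.sq_sqrt (by positivity : 0 ≤ up c * f (up c))]
        apply pow_le_pow_left₀ _ a3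
        have : 0 < 1 - up c := by linarith
        positivity
      have a5 := hlip 1 (by simp) (up c) ⟨hup0.le, h2.le⟩
      rw [hf1, sub_zero, abs_of_pos q2, abs_sub_comm, abs_of_pos (by linarith)] at a5
      have a6 : up c * f (up c) ≤ L * (1 - up c) := by nlinarith
      rw [le_div_iff₀ (by positivity)]
      have : 0 < 1 - up c := by linarith
      apply le_of_mul_le_mul_right _ this
      nlinarith
  have hev : ∀ᶠ c : ℝ in atTop, c ≥ max 1 (cstar + 1) := eventually_ge_atTop _
  have hlim : Tendsto (fun c : ℝ => L / c ^ 2) atTop (nhds 0) :=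
    tendsto_const_nhds.div_atTop (tendsto_pow_atTop two_ne_zero)
  have hcs : ∀ c ≥ max 1 (cstar + 1), cstar < c := fun c hc => by
    linarith [(le_max_right 1 (cstar + 1)).trans hc]
  refine ⟨⟨L, hL, _, key⟩, ?_, ?_, ?_⟩
  · have h2 : Tendsto (fun c : ℝ => ustar + L / c ^ 2) atTop (nhds ustar) := by
      simpa using hlim.const_add ustar
    refine tendsto_of_tendsto_of_tendsto_of_le_of_le' tendsto_const_nhds h2 ?_ ?_
    · filter_upwards [hev] with c hc
      exact (hm c (hcs c hc)).1.1.le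
    · filter_upwards [hev] with c hc
      linarith [(key c hc).1]
  · have h2 : Tendsto (fun c : ℝ => 1 - L / c ^ 2) atTop (nhds 1) := by
      simpa using hlim.const_sub 1
    refine tendsto_of_tendsto_of_tendsto_of_le_of_le' h2 tendsto_const_nhds ?_ ?_
    · filter_upwards [hev] with c hc
      linarith [(key c hc).2]
    · filter_upwards [hev] with c hc
      exact (hp c (hcs c hc)).1.2.le
  have hG := aux_cont f hd.continuous ustar hs0
  obtain ⟨B, hB⟩ := isCompact_Icc.exists_bound_of_continuousOn hG
  have hB0 : 0 ≤ B := (norm_nonneg _).trans (hB ustar (left_mem_Icc.2 hs1.le))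
  refine ⟨4 * B * L + 2 * (L / Real.sqrt ustar) + 2 * (L / ustar), max 1 (cstar + 1), ?_⟩
  intro c hc
  have hc1 : 1 ≤ c := (le_max_left _ _).trans hc
  have hc0 : 0 < c := by linarith
  obtain ⟨k1, k2⟩ := key c hc
  obtain ⟨⟨m1, m2⟩, -⟩ := hm c (hcs c hc)
  obtain ⟨⟨p1, p2⟩, p3, -⟩ := hp c (hcs c hc)
  have hIG : ∀ x y, ustar ≤ x → x ≤ y → y ≤ 1 → IntervalIntegrable
      (fun u => Real.sqrt (f u) / (u * Real.sqrt u)) MeasureTheory.volume x y := by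
    intro x y h1 h2 h3
    apply ContinuousOn.intervalIntegrable
    rw [uIcc_of_le h2]
    exact hG.mono (Icc_subset_Icc h1 h3)
  have hbd : ∀ x y, ustar ≤ x → x ≤ y → y ≤ 1 →
      |∫ u in x..y, Real.sqrt (f u) / (u * Real.sqrt u)| ≤ B * (y - x) := by
    intro x y h1 h2 h3
    have := intervalIntegral.norm_integral_le_of_norm_le_const (a := x) (b := y) (C := B)
      (f := fun u => Real.sqrt (f u) / (u * Real.sqrt u)) (fun u hu => by
        rw [uIoc_of_le h2] at hu
        exact hB u ⟨by linarith [hu.1], by linarith [hu.2]⟩)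
    rwa [abs_of_nonneg (by linarith : 0 ≤ y - x)] at this
  have F1 := aux_ftc f hf ustar hustar hpos hf'u hf'1 (um c) (up c) m1.le p3.le p2.le
  have F2 := aux_ftc f hf ustar hustar hpos hf'u hf'1 ustar 1 le_rfl hs1.le le_rfl
  have F3 : ∫ u in ustar..(1:ℝ), (3 * Real.sqrt (f u) / (2 * u * Real.sqrt u)
                  + deriv f u / (2 * Real.sqrt (u * f u)))
      = (3 / 2) * (∫ u in ustar..(1:ℝ), Real.sqrt (f u) / (u * Real.sqrt u))
        + (1 / 2) * ∫ u in ustar..(1:ℝ), deriv f u / Real.sqrt (u * f u) := by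
    rw [← intervalIntegral.integral_const_mul, ← intervalIntegral.integral_const_mul,
      ← intervalIntegral.integral_add ((hIG ustar 1 le_rfl hs1.le le_rfl).const_mul _)
        ((aux_int f hf ustar hustar hpos hf'u hf'1).const_mul _)]
    congr 1
    funext u
    rw [mul_assoc 2, mul_div_mul_comm, div_mul_div_comm 1 2, one_mul]
  have F4 := intervalIntegral.integral_add_adjacent_intervals
    (hIG ustar (um c) le_rfl m1.le m2.le) (hIG (um c) (up c) m1.le p3.le p2.le)
  have F5 := intervalIntegral.integral_add_adjacent_intervals
    (hIG ustar (up c) le_rfl p1.le p2.le) (hIG (up c) 1 p1.le p2.le le_rfl)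
  have b1 := abs_le.1 (hbd ustar (um c) le_rfl m1.le m2.le)
  have b2 := abs_le.1 (hbd (up c) 1 p1.le p2.le le_rfl)
  rw [F3, F1, F2, hf1, hfs]
  simp only [zero_div, Real.sqrt_zero, mul_zero, sub_zero, zero_add]
  have hLc : L / c ^ 2 ≤ L / c := by
    apply div_le_div_of_nonneg_left hL.le hc0; nlinarith
  have c1 : B * (um c - ustar) ≤ B * (L / c) := by gcongr; linarith
  have c2 : B * (1 - up c) ≤ B * (L / c) := by gcongr; linarith
  -- boundary terms
  have hbt : ∀ v, ustar < v → f v ≤ L * (L / c ^ 2) →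
      Real.sqrt (f v / v) ≤ L / Real.sqrt ustar / c := by
    intro v hv hfv
    apply Real.sqrt_le_iff.2
    refine ⟨by positivity, ?_⟩
    rw [div_pow, div_pow, Real.sq_sqrt hs0.le]
    calc f v / v ≤ L * (L / c ^ 2) / v := by
          apply div_le_div_of_nonneg_right hfv (by linarith)
      _ ≤ L * (L / c ^ 2) / ustar := by
          apply div_le_div_of_nonneg_left (by positivity) hs0 hv.le
      _ = L ^ 2 / ustar / c ^ 2 := by field_simp
  have d1 : Real.sqrt (f (um c) / um c) ≤ L / Real.sqrt ustar / c := by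
    apply hbt _ m1
    have := hlip ustar ⟨hs0.le, hs1.le⟩ (um c) ⟨by linarith, m2.le⟩
    rw [hfs, sub_zero, abs_of_pos (by linarith : 0 < um c - ustar)] at this
    have h2 : L * (um c - ustar) ≤ L * (L / c ^ 2) := by gcongr
    linarith [le_abs_self (f (um c))]
  have d2 : Real.sqrt (f (up c) / up c) ≤ L / Real.sqrt ustar / c := by
    apply hbt _ p1
    have := hlip 1 (by simp) (up c) ⟨by linarith, p2.le⟩
    rw [hf1, sub_zero, abs_sub_comm, abs_of_pos (by linarith : 0 < 1 - up c)] at this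
    have h2 : L * (1 - up c) ≤ L * (L / c ^ 2) := by gcongr
    linarith [le_abs_self (f (up c))]
  have d3 := Real.sqrt_nonneg (f (um c) / um c)
  have d4 := Real.sqrt_nonneg (f (up c) / up c)
  -- logarithms
  have hum0 : 0 < um c := by linarith
  have hup0 : 0 < up c := by linarith
  have hlg : ∀ x y, ustar ≤ x → x ≤ y → y - x ≤ L / c ^ 2 →
      0 ≤ c * (Real.log y - Real.log x) ∧ c * (Real.log y - Real.log x) ≤ L / ustar / c := by
    intro x y h1 h2 h3
    have hx : 0 < x := by linarith
    have hy : 0 < y := by linarith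
    constructor
    · have := Real.log_le_log hx h2
      apply mul_nonneg hc0.le; linarith
    · have e1 := Real.log_le_sub_one_of_pos (div_pos hy hx)
      rw [Real.log_div hy.ne' hx.ne'] at e1
      have e2 : y / x - 1 ≤ L / c ^ 2 / ustar := by
        have : y / x - 1 = (y - x) / x := by field_simp
        rw [this]
        calc (y - x) / x ≤ (y - x) / ustar := by
              apply div_le_div_of_nonneg_left (by linarith) hs0 h1
          _ ≤ _ := by gcongr
      calc c * (Real.log y - Real.log x) ≤ c * (L / c ^ 2 / ustar) := by
            gcongr; linarith
        _ = L / ustar / c := by field_simp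
  obtain ⟨l1, l2⟩ := hlg ustar (um c) le_rfl m1.le k1
  obtain ⟨l3, l4⟩ := hlg (up c) 1 p1.le p2.le k2
  rw [Real.log_one] at l3 l4
  rw [Real.log_div hup0.ne' hum0.ne', abs_of_neg (Real.log_neg hs0 hs1)]
  have hK : (4 * B * L + 2 * (L / Real.sqrt ustar) + 2 * (L / ustar)) / c
      = 4 * (B * (L / c)) + 2 * (L / Real.sqrt ustar / c) + 2 * (L / ustar / c) := by ring
  rw [hK]
  have hn : 0 ≤ L / Real.sqrt ustar / c := by positivity
  have hn2 : 0 ≤ B * (L / c) := by positivity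
  rw [abs_le]
  constructor <;> linarith
end

section
/- Let f be monostable (assumption (A1)) and let c₁ < c₂. For i = 1,2, let P(·, c_i) : [0,1] → [0,∞) be the solution of dP/dU = −c_i − f(U)/P with P(1, c_i) = 0 and P(U, c_i) > 0 for U ∈ [0,1). Then P(U, c₁) < P(U, c₂) for every U ∈ [0,1). -/
open Set Filter

lemma right_deriv_aux (f : ℝ → ℝ) (hf : Continuous f) (c : ℝ) (P : ℝ → ℝ)
    (hc : ContinuousOn P (Icc (0:ℝ) 1)) (hpos : ∀ u ∈ Ico (0:ℝ) 1, 0 < P u)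
    (hode : ∀ u ∈ Ioo (0:ℝ) 1, HasDerivAt P (-c - f u / P u) u) :
    ∀ u ∈ Ico (0:ℝ) 1, HasDerivWithinAt P (-c - f u / P u) (Ici u) u := by
  intro u hu
  rcases eq_or_lt_of_le hu.1 with h | h
  · subst h
    have h01 : Ioo (0:ℝ) 1 ∈ nhdsWithin (0:ℝ) (Ioi 0) := Ioo_mem_nhdsGT one_pos
    apply hasDerivWithinAt_Ici_of_tendsto_deriv (s := Ioo (0:ℝ) 1)
    · intro x hx
      exact (hode x hx).differentiableAt.differentiableWithinAt
    · exact (hc 0 (by simp)).mono Ioo_subset_Icc_self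
    · exact h01
    · have hP : Tendsto P (nhdsWithin (0:ℝ) (Ioi 0)) (nhds (P 0)) := by
        have := (hc 0 (by simp)).mono Ioo_subset_Icc_self
        have h2 : Tendsto P (nhdsWithin (0:ℝ) (Ioo 0 1)) (nhds (P 0)) := this
        rwa [nhdsWithin_Ioo_eq_nhdsGT one_pos] at h2
      have hF : Tendsto f (nhdsWithin (0:ℝ) (Ioi 0)) (nhds (f 0)) :=
        (hf.tendsto 0).mono_left nhdsWithin_le_nhds
      have := (tendsto_const_nhds (x := -c)).sub (hF.div hP (hpos 0 hu).ne')
      refine this.congr' ?_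
      filter_upwards [h01] with x hx
      exact ((hode x hx).deriv).symm
  · exact (hode u ⟨h, hu.2⟩).hasDerivWithinAt

/-- monostable case. The stable-manifold solutions of
`dP/dU = -c - f(U)/P` with `P(1) = 0`, `P > 0` on `[0,1)`, are strictly
increasing in the speed `c`: if `c₁ < c₂` then `P(U,c₁) < P(U,c₂)` on `[0,1)`. -/
theorem stable_manifold_monotone_in_speed
    (f : ℝ → ℝ) (hf : ContDiff ℝ 2 f) (hf0 : f 0 = 0) (hf1 : f 1 = 0)
    (hf'' : ∀ u ∈ Icc (0:ℝ) 1, deriv (deriv f) u < 0)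
    (c₁ c₂ : ℝ) (hc : c₁ < c₂)
    (P₁ P₂ : ℝ → ℝ)
    (hP₁cont : ContinuousOn P₁ (Icc (0:ℝ) 1)) (hP₁1 : P₁ 1 = 0)
    (hP₁pos : ∀ u ∈ Ico (0:ℝ) 1, 0 < P₁ u)
    (hP₁ode : ∀ u ∈ Ioo (0:ℝ) 1, HasDerivAt P₁ (-c₁ - f u / P₁ u) u)
    (hP₂cont : ContinuousOn P₂ (Icc (0:ℝ) 1)) (hP₂1 : P₂ 1 = 0)
    (hP₂pos : ∀ u ∈ Ico (0:ℝ) 1, 0 < P₂ u)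
    (hP₂ode : ∀ u ∈ Ioo (0:ℝ) 1, HasDerivAt P₂ (-c₂ - f u / P₂ u) u) :
    ∀ u ∈ Ico (0:ℝ) 1, P₁ u < P₂ u := by
  have hfn : ∀ u ∈ Icc (0:ℝ) 1, 0 ≤ f u := by
    have hcv : ConcaveOn ℝ (Icc (0:ℝ) 1) f := by
      refine (strictConcaveOn_of_deriv2_neg (convex_Icc 0 1) hf.continuous.continuousOn ?_).concaveOn
      intro x hx
      rw [interior_Icc] at hx
      exact hf'' x (Ioo_subset_Icc_self hx)
    intro u hu
    have := hcv.min_le_of_mem_Icc (x := 0) (y := 1) (z := u) (by simp) (by simp) hu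
    simpa [hf0, hf1] using this
  have h1 := right_deriv_aux f hf.continuous c₁ P₁ hP₁cont hP₁pos hP₁ode
  have h2 := right_deriv_aux f hf.continuous c₂ P₂ hP₂cont hP₂pos hP₂ode
  intro a ha
  by_contra hcon
  push Not at hcon
  have hsub : Icc a 1 ⊆ Icc (0:ℝ) 1 := Icc_subset_Icc_left ha.1
  have hWc : ContinuousOn (P₂ - P₁) (Icc a 1) := (hP₂cont.sub hP₁cont).mono hsub
  have hle : ∀ ⦃x⦄, x ∈ Icc a 1 → (P₂ - P₁) x ≤ (fun _ => (0:ℝ)) x := by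
    refine image_le_of_deriv_right_lt_deriv_boundary (B' := fun _ => (0:ℝ)) hWc
      (fun x hx => (h2 x ⟨ha.1.trans hx.1, hx.2⟩).sub (h1 x ⟨ha.1.trans hx.1, hx.2⟩))
      (by simpa using hcon) (fun x => hasDerivAt_const x 0) ?_
    intro x hx he
    have : P₂ x = P₁ x := by simpa [sub_eq_zero] using he
    rw [this]
    linarith
  have hanti : StrictAntiOn (P₂ - P₁) (Icc a 1) := by
    apply strictAntiOn_of_deriv_neg (convex_Icc a 1) hWc
    intro x hx
    rw [interior_Icc] at hx
    have hx0 : x ∈ Ioo (0:ℝ) 1 := ⟨ha.1.trans_lt hx.1, hx.2⟩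
    rw [((hP₂ode x hx0).sub (hP₁ode x hx0)).deriv]
    have hl : P₂ x ≤ P₁ x := by simpa using hle (Ioo_subset_Icc_self hx)
    have := div_le_div_of_nonneg_left (hfn x (Ioo_subset_Icc_self hx0))
      (hP₂pos x (Ioo_subset_Ico_self hx0)) hl
    linarith
  have := hanti (left_mem_Icc.2 ha.2.le) (right_mem_Icc.2 ha.2.le) ha.2
  simp [hP₁1, hP₂1] at this
  linarith
end

section
/- Let f be monostable (assumption (A1)), let c > c*, and let z : ℝ × [0,1] → [0,∞) be a smooth nonnegative integrable function such that there exists a smooth function u : ℝ × [0,1] → [0,1] solving f(u) + c·∂u/∂x₁ + Δu − z = 0 on the strip ℝ × [0,1], with Neumann boundary conditions ∂u/∂x₂ = 0 at x₂ = 0 and x₂ = 1, with u(x₁,x₂) → 0 as x₁ → −∞ and u(x₁,x₂) → 1 as x₁ → +∞ (uniformly in x₂), with ∇u → 0 as |x₁| → ∞, and with f∘u integrable on the strip. Then ‖z‖_{L¹(ℝ×[0,1])} ≥ C_min, where C_min = U₀'(0+) is the minimal cost of the 1-dimensional problem (P1) at speed c. -/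
open Set Filter MeasureTheory

lemma aux_q (f : ℝ → ℝ) (hf : Continuous f) (c : ℝ)
    (U₀ : ℝ → ℝ) (Cmin : ℝ)
    (hU₀cont : Continuous U₀)
    (hU₀zero : ∀ x ≤ (0:ℝ), U₀ x = 0)
    (hU₀smooth : ContDiffOn ℝ 2 U₀ (Ioi 0))
    (hU₀ode : ∀ x > (0:ℝ), deriv (deriv U₀) x + c * deriv U₀ x + f (U₀ x) = 0)
    (hCmin : HasDerivWithinAt U₀ Cmin (Ioi 0) 0) :
    ∃ q : ℝ → ℝ, Continuous q ∧ q 0 = Cmin ∧ (∀ y > 0, HasDerivAt U₀ (q y) y) ∧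
      ∀ y > 0, HasDerivAt q (-c * q y - f (U₀ y)) y := by
  have hfc : Continuous (fun y => f (U₀ y)) := hf.comp hU₀cont
  have hI : ∀ y, HasDerivAt (fun y => ∫ t in (0:ℝ)..y, f (U₀ t)) (f (U₀ y)) y :=
    fun y => (hfc.integral_hasStrictDerivAt 0 y).hasDerivAt
  set q : ℝ → ℝ := fun y => Cmin - c * U₀ y - ∫ t in (0:ℝ)..y, f (U₀ t) with hq
  have hqc : Continuous q := by
    have : Continuous (fun y => ∫ t in (0:ℝ)..y, f (U₀ t)) :=
      continuous_iff_continuousAt.2 fun y => (hI y).continuousAt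
    fun_prop
  have hq0 : q 0 = Cmin := by simp [hq, hU₀zero 0 le_rfl]
  have hd : ∀ y > 0, HasDerivAt U₀ (deriv U₀ y) y := fun y hy =>
    ((hU₀smooth.differentiableOn (by norm_num)).differentiableAt (Ioi_mem_nhds hy)).hasDerivAt
  have hC1 : ContDiffOn ℝ 1 (deriv U₀) (Ioi 0) :=
    hU₀smooth.deriv_of_isOpen isOpen_Ioi (by norm_num)
  have hd2 : ∀ y > 0, HasDerivAt (deriv U₀) (deriv (deriv U₀) y) y := fun y hy =>
    ((hC1.differentiableOn (by norm_num)).differentiableAt (Ioi_mem_nhds hy)).hasDerivAt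
  have hdq : ∀ y > 0, HasDerivAt q (-(c * deriv U₀ y) - f (U₀ y)) y := by
    intro y hy
    have := (((hd y hy).const_mul c).const_sub Cmin).sub (hI y)
    exact this
  have hdiff : ∀ y > 0, HasDerivAt (fun y => deriv U₀ y - q y) 0 y := by
    intro y hy
    have h1 := (hd2 y hy).sub (hdq y hy)
    have h2 := hU₀ode y hy
    exact h1.congr_deriv (by linarith)
  obtain ⟨k, hk⟩ : ∃ k, ∀ y > 0, deriv U₀ y = q y + k := by
    refine ⟨deriv U₀ 1 - q 1, fun y hy => ?_⟩
    have := isOpen_Ioi.is_const_of_deriv_eq_zero (𝕜 := ℝ) (s := Ioi (0:ℝ))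
      (f := fun y => deriv U₀ y - q y) isPreconnected_Ioi
      (fun y hy => (hdiff y hy).differentiableAt.differentiableWithinAt)
      (fun y hy => (hdiff y hy).deriv) (show y ∈ Ioi (0:ℝ) from hy) (show (1:ℝ) ∈ Ioi (0:ℝ) from mem_Ioi.2 one_pos)
    have this' : deriv U₀ y - q y = deriv U₀ 1 - q 1 := this
    linarith
  have hqk : Continuous (fun y => q y + k) := by fun_prop
  have hrep : ∀ y ∈ Ioi (0:ℝ), U₀ y = ∫ t in (0:ℝ)..y, (q t + k) := by
    intro y hy
    have := intervalIntegral.integral_eq_sub_of_hasDerivAt_of_le (f := U₀) (f' := fun y => q y + k)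
      (le_of_lt hy) hU₀cont.continuousOn
      (fun x hx => by simpa only [← hk x hx.1] using hd x hx.1) (hqk.intervalIntegrable _ _)
    rw [this, hU₀zero 0 le_rfl]; ring
  have h1 : HasDerivWithinAt U₀ (q 0 + k) (Ioi 0) 0 := by
    refine (hqk.integral_hasStrictDerivAt 0 0).hasDerivAt.hasDerivWithinAt.congr hrep ?_
    simp [hU₀zero 0 le_rfl]
  have hk0 : q 0 + k = Cmin := (uniqueDiffWithinAt_Ioi (0:ℝ)).eq_deriv _ h1 hCmin
  have hk0' : k = 0 := by linarith
  subst hk0'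
  refine ⟨q, hqc, hq0, fun y hy => ?_, fun y hy => ?_⟩
  · have := hd y hy
    rwa [hk y hy, add_zero] at this
  · have := hdq y hy
    rw [hk y hy, add_zero] at this
    exact this.congr_deriv (by ring)

lemma aux_y0 (U₀ : ℝ → ℝ)
    (hU₀cont : Continuous U₀)
    (hU₀range : ∀ x, U₀ x ∈ Icc (0:ℝ) 1)
    (hU₀zero : ∀ x ≤ (0:ℝ), U₀ x = 0)
    (hU₀top : Tendsto U₀ atTop (nhds 1))
    (q : ℝ → ℝ) (hq : Continuous q)
    (hUq : ∀ y > 0, HasDerivAt U₀ (q y) y) (ε : ℝ) (hε : 0 < ε) :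
    ∃ y > 0, 1 - ε < U₀ y ∧ U₀ y < 1 ∧ q y < ε := by
  by_cases hlt : ∀ y, U₀ y < 1
  · obtain ⟨N, hN⟩ := (hU₀top.eventually (lt_mem_nhds (show 1 - ε < 1 by linarith))).exists_forall_of_atTop
    set a := max N 1
    have ha : 0 < a := lt_of_lt_of_le one_pos (le_max_right _ _)
    obtain ⟨y, hy, hy'⟩ := exists_hasDerivAt_eq_slope U₀ q (show a < a + 1 by linarith)
      hU₀cont.continuousOn (fun x hx => hUq x (ha.trans hx.1))
    refine ⟨y, ha.trans hy.1, hN y ((le_max_left _ _).trans hy.1.le), hlt y, ?_⟩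
    rw [hy']
    have := hN a (le_max_left _ _)
    have := hlt (a+1)
    have : a + 1 - a = 1 := by ring
    rw [this, div_one]; linarith
  · push Not at hlt
    obtain ⟨b, hb⟩ := hlt
    set S := {y | 1 ≤ U₀ y}
    have hSc : IsClosed S := isClosed_le continuous_const hU₀cont
    have hSb : BddBelow S := ⟨0, fun y hy => by
      by_contra h
      have h1 : 1 ≤ U₀ y := hy
      rw [hU₀zero y (le_of_lt (not_le.1 h))] at h1
      linarith⟩
    have hy1 : sInf S ∈ S := hSc.csInf_mem ⟨b, hb⟩ hSb
    set y1 := sInf S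
    have h1 : U₀ y1 = 1 := le_antisymm (hU₀range y1).2 hy1
    have hpos : 0 < y1 := by
      by_contra h
      rw [hU₀zero y1 (not_lt.1 h)] at h1
      linarith
    have hq0 : q y1 = 0 := by
      refine IsLocalMax.hasDerivAt_eq_zero (f := U₀) (a := y1) ?_ (hUq y1 hpos)
      exact Eventually.of_forall fun x => by rw [h1]; exact (hU₀range x).2
    have e1 : ∀ᶠ y in nhds y1, 1 - ε < U₀ y :=
      hU₀cont.continuousAt.eventually (lt_mem_nhds (by rw [h1]; linarith))
    have e2 : ∀ᶠ y in nhds y1, q y < ε :=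
      hq.continuousAt.eventually (gt_mem_nhds (by rw [hq0]; linarith))
    have e3 : ∀ᶠ y in nhds y1, 0 < y := lt_mem_nhds hpos
    have e4 := ((e1.and (e2.and e3)).filter_mono (nhdsWithin_le_nhds (s := Iio y1))).and
      self_mem_nhdsWithin
    obtain ⟨y, ⟨ha, hb, hc⟩, hd⟩ := e4.exists
    refine ⟨y, hc, ha, ?_, hb⟩
    by_contra h
    exact absurd (csInf_le hSb (show y ∈ S from not_lt.1 h)) (not_le.2 hd)

lemma aux_qpos (f : ℝ → ℝ) (c : ℝ) (U₀ : ℝ → ℝ) (Cmin : ℝ)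
    (hfpos : ∀ s ∈ Ioo (0:ℝ) 1, 0 < f s)
    (hU₀mono : Monotone U₀)
    (hU₀zero : ∀ x ≤ (0:ℝ), U₀ x = 0)
    (hCmin : HasDerivWithinAt U₀ Cmin (Ioi 0) 0) (hCminpos : 0 < Cmin)
    (q : ℝ → ℝ) (hq0 : q 0 = Cmin)
    (hUq : ∀ y > 0, HasDerivAt U₀ (q y) y)
    (hqq : ∀ y > 0, HasDerivAt q (-c * q y - f (U₀ y)) y)
    (y0 : ℝ) (h1 : U₀ y0 < 1) : ∀ y ∈ Icc 0 y0, 0 < q y := by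
  have hU0 : U₀ 0 = 0 := hU₀zero 0 le_rfl
  have hUpos : ∀ y > 0, 0 < U₀ y := by
    intro y hy
    have h := (hasDerivWithinAt_iff_tendsto_slope' (by simp)).1 hCmin
    have e1 := h.eventually (lt_mem_nhds hCminpos)
    have e2 : ∀ᶠ x in nhdsWithin (0:ℝ) (Ioi 0), x < y := 
      (gt_mem_nhds hy).filter_mono nhdsWithin_le_nhds
    obtain ⟨x, ⟨hx1, hx2⟩, hx3⟩ := ((e1.and e2).and self_mem_nhdsWithin).exists
    have hx3' : 0 < x := hx3
    rw [slope_def_field, hU0, sub_zero, sub_zero] at hx1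
    have : 0 < U₀ x := by
      have := mul_pos hx1 hx3'
      rwa [div_mul_cancel₀ _ hx3'.ne'] at this
    exact this.trans_le (hU₀mono hx2.le)
  have hqn : ∀ y > 0, 0 ≤ q y := fun y hy => by
    rw [← (hUq y hy).deriv]; exact hU₀mono.deriv_nonneg
  rintro y ⟨hy0, hy1⟩
  rcases hy0.eq_or_lt with h | h
  · rw [← h, hq0]; exact hCminpos
  · refine lt_of_le_of_ne (hqn y h) fun hc => ?_
    have hmin : IsLocalMin q y := by
      filter_upwards [lt_mem_nhds h] with x hx
      rw [← hc]; exact hqn x hx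
    have h2 := hmin.hasDerivAt_eq_zero (hqq y h)
    rw [← hc] at h2
    have := hfpos (U₀ y) ⟨hUpos y h, (hU₀mono hy1).trans_lt h1⟩
    linarith

lemma aux_P (f : ℝ → ℝ) (c : ℝ) (U₀ : ℝ → ℝ)
    (hU₀cont : Continuous U₀) (hU0 : U₀ 0 = 0)
    (q : ℝ → ℝ) (hq : Continuous q)
    (hUq : ∀ y > 0, HasDerivAt U₀ (q y) y)
    (hqq : ∀ y > 0, HasDerivAt q (-c * q y - f (U₀ y)) y)
    (y0 : ℝ) (hy0 : 0 < y0) (hqpos : ∀ y ∈ Icc 0 y0, 0 < q y) :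
    0 < U₀ y0 ∧ ∃ P : ℝ → ℝ, Continuous P ∧ (∀ s, 0 < P s) ∧ P 0 = q 0 ∧ P (U₀ y0) = q y0 ∧
      ∀ s ∈ Ioo 0 (U₀ y0), HasDerivAt P (-c - f s / P s) s := by
  set r : ℝ → ℝ := fun y => q (max 0 (min y y0)) with hr
  have hrc : Continuous r := by fun_prop
  have hmem : ∀ y, max 0 (min y y0) ∈ Icc 0 y0 := fun y =>
    ⟨le_max_left _ _, max_le hy0.le (min_le_right _ _)⟩
  have hrq : ∀ y ∈ Icc 0 y0, r y = q y := fun y hy => by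
    simp only [hr]; rw [min_eq_left hy.2, max_eq_right hy.1]
  obtain ⟨ym, hym, hmin⟩ := isCompact_Icc.exists_isMinOn (nonempty_Icc.2 hy0.le) hq.continuousOn
  set m := q ym
  have hm : 0 < m := hqpos ym hym
  have hrm : ∀ y, m ≤ r y := fun y => hmin (hmem y)
  set V : ℝ → ℝ := fun y => ∫ t in (0:ℝ)..y, r t with hV
  have hVd : ∀ y, HasDerivAt V (r y) y := fun y => (hrc.integral_hasStrictDerivAt 0 y).hasDerivAt
  have hVc : Continuous V := continuous_iff_continuousAt.2 fun y => (hVd y).continuousAt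
  have hVm : StrictMono V := strictMono_of_deriv_pos fun y => by
    rw [(hVd y).deriv]; exact hm.trans_le (hrm y)
  have hV0 : V 0 = 0 := by simp [hV]
  have hVsub : Monotone (fun y => V y - m * y) := by
    refine monotone_of_hasDerivAt_nonneg (f' := fun y => r y - m) (fun y => ?_) (fun y => ?_)
    · have := (hVd y).sub ((hasDerivAt_id y).const_mul m)
      exact this.congr_deriv (by simp)
    · exact sub_nonneg.2 (hrm y)
  have hVt : Tendsto V atTop atTop := by
    refine tendsto_atTop_mono' _ ?_ (tendsto_id.const_mul_atTop hm)
    filter_upwards [eventually_ge_atTop 0] with y hy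
    have := hVsub hy
    simp only [hV0, id] at this ⊢; linarith
  have hVb : Tendsto V atBot atBot := by
    refine tendsto_atBot_mono' _ ?_ (tendsto_id.const_mul_atBot hm)
    filter_upwards [eventually_le_atBot 0] with y hy
    have := hVsub hy
    simp only [hV0, id] at this ⊢; linarith
  set e := hVm.orderIsoOfSurjective V (hVc.surjective hVt hVb) with he
  have heV : ∀ y, e y = V y := fun y => rfl
  set Y : ℝ → ℝ := fun s => e.symm s with hY
  have hYc : Continuous Y := e.symm.continuous
  have hVY : ∀ s, V (Y s) = s := fun s => e.apply_symm_apply s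
  have hYV : ∀ y, Y (V y) = y := fun y => e.symm_apply_apply y
  have hVU : ∀ y ∈ Icc 0 y0, V y = U₀ y := by
    intro y hy
    have := intervalIntegral.integral_eq_sub_of_hasDerivAt_of_le (f := U₀) (f' := r)
      hy.1 hU₀cont.continuousOn
      (fun x hx => by rw [hrq x ⟨hx.1.le, hx.2.le.trans hy.2⟩]; exact hUq x hx.1)
      (hrc.intervalIntegrable _ _)
    simp only [hV]; rw [this, hU0, sub_zero]
  have hVy0 := hVU y0 ⟨hy0.le, le_rfl⟩
  have hs0 : 0 < U₀ y0 := by rw [← hVy0, ← hV0]; exact hVm hy0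
  refine ⟨hs0, fun s => r (Y s), hrc.comp hYc, fun s => hm.trans_le (hrm _), ?_, ?_, ?_⟩
  · have : Y 0 = 0 := by rw [← hV0, hYV, hV0]
    simp only [this]; exact hrq 0 ⟨le_rfl, hy0.le⟩
  · have : Y (U₀ y0) = y0 := by rw [← hVy0, hYV]
    simp only [this]; exact hrq y0 ⟨hy0.le, le_rfl⟩
  · intro s hs
    have h1 : 0 < Y s := by
      rw [← hVm.lt_iff_lt, hVY, hV0]; exact hs.1
    have h2 : Y s < y0 := by
      rw [← hVm.lt_iff_lt, hVY, hVy0]; exact hs.2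
    have hpos : 0 < r (Y s) := hm.trans_le (hrm _)
    have hYd : HasDerivAt Y (r (Y s))⁻¹ s :=
      HasDerivAt.of_local_left_inverse hYc.continuousAt (hVd (Y s)) hpos.ne'
        (Eventually.of_forall hVY)
    have hrd : HasDerivAt r (-c * q (Y s) - f (U₀ (Y s))) (Y s) := by
      refine (hqq (Y s) h1).congr_of_eventuallyEq ?_
      filter_upwards [Ioo_mem_nhds h1 h2] with x hx using hrq x ⟨hx.1.le, hx.2.le⟩
    have hUY : U₀ (Y s) = s := by rw [← hVU _ ⟨h1.le, h2.le⟩, hVY]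
    rw [hUY, ← hrq _ ⟨h1.le, h2.le⟩] at hrd
    have := hrd.comp s hYd
    refine HasDerivAt.congr_deriv this ?_
    field_simp

lemma aux_phi (f : ℝ → ℝ) (hf : Continuous f) (c : ℝ) (s0 : ℝ) (hs0 : 0 < s0) (hs1 : s0 < 1)
    (hfn : ∀ s ∈ Icc (0:ℝ) 1, 0 ≤ f s)
    (P : ℝ → ℝ) (hP : Continuous P) (hPpos : ∀ s, 0 < P s)
    (hPd : ∀ s ∈ Ioo 0 s0, HasDerivAt P (-c - f s / P s) s) :
    ∃ φ φ' h : ℝ → ℝ, (∀ s, HasDerivAt φ (φ' s) s) ∧ Continuous φ' ∧ Continuous h ∧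
      (∀ s ∈ Icc (0:ℝ) 1, 0 ≤ φ s ∧ φ s ≤ 1) ∧
      (∀ s ∈ Icc (0:ℝ) 1, ∀ a b : ℝ,
        (h s - c * φ s) * a ≤ f s * φ s - φ' s * (a * a + b * b)) ∧
      P 0 - P s0 - |c| * (1 - s0) ≤ ∫ s in (0:ℝ)..1, h s := by
  set cl : ℝ → ℝ := fun s => max 0 (min s s0) with hcl
  have hclm : ∀ s, cl s ∈ Icc (0:ℝ) 1 := fun s =>
    ⟨le_max_left _ _, max_le zero_le_one ((min_le_right _ _).trans hs1.le)⟩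
  have hcle : ∀ s ∈ Icc 0 s0, cl s = s := fun s hs => by
    simp only [hcl]; rw [min_eq_left hs.2, max_eq_right hs.1]
  have hclc : Continuous cl := by fun_prop
  set g : ℝ → ℝ := fun s => f (cl s) / P s ^ 2 with hg
  have hgc : Continuous g := (hf.comp hclc).div₀ (hP.pow 2) (fun s => (pow_pos (hPpos s) 2).ne')
  have hgn : ∀ s, 0 ≤ g s := fun s => div_nonneg (hfn _ (hclm s)) (sq_nonneg _)
  set φ : ℝ → ℝ := fun s => Real.exp (-∫ t in (0:ℝ)..s, g t) with hφ
  have hφd : ∀ s, HasDerivAt φ (-(g s * φ s)) s := fun s => by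
    have := ((hgc.integral_hasStrictDerivAt 0 s).hasDerivAt.neg).exp
    refine HasDerivAt.congr_deriv (f := φ) this ?_
    change Real.exp (-∫ t in (0:ℝ)..s, g t) * -g s = -(g s * Real.exp (-∫ t in (0:ℝ)..s, g t))
    ring
  have hφc : Continuous φ := continuous_iff_continuousAt.2 fun y => (hφd y).continuousAt
  have hφpos : ∀ s, 0 < φ s := fun s => Real.exp_pos _
  have hφ1 : ∀ s ≥ 0, φ s ≤ 1 := fun s hs => by
    rw [hφ]; simp only
    rw [Real.exp_le_one_iff, neg_nonpos]
    exact intervalIntegral.integral_nonneg hs fun t _ => hgn t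
  have hφ0 : φ 0 = 1 := by simp [hφ]
  set κ : ℝ → ℝ := fun s => min (f s) (f (cl s)) with hκ
  have hκc : Continuous κ := hf.min (hf.comp hclc)
  set h : ℝ → ℝ := fun s => c * φ s + 2 * (κ s * φ s / P s) with hh
  have hhc : Continuous h := by
    have : Continuous fun s => κ s * φ s / P s := (hκc.mul hφc).div₀ hP fun s => (hPpos s).ne'
    fun_prop
  refine ⟨φ, fun s => -(g s * φ s), h, hφd, by fun_prop, hhc,
    fun s hs => ⟨(hφpos s).le, hφ1 s hs.1⟩, ?_, ?_⟩
  · intro s hs a b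
    have hP0 := hPpos s
    have hκn : 0 ≤ κ s := le_min (hfn s hs) (hfn _ (hclm s))
    have h1 : κ s * (2 * (a / P s)) ≤ f s + g s * (a * a + b * b) := by
      have e1 : κ s ≤ f s := min_le_left _ _
      have e2 : κ s * (a / P s) ^ 2 ≤ g s * (a * a) := by
        have : g s * (a * a) = f (cl s) * (a / P s) ^ 2 := by
          simp only [hg]; field_simp
        rw [this]
        exact mul_le_mul_of_nonneg_right (min_le_right _ _) (sq_nonneg _)
      have e3 : 0 ≤ g s * (b * b) := mul_nonneg (hgn s) (mul_self_nonneg b)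
      nlinarith [mul_nonneg hκn (sq_nonneg (a / P s - 1))]
    have h2 := mul_le_mul_of_nonneg_right h1 (hφpos s).le
    have h3 : (h s - c * φ s) * a = κ s * (2 * (a / P s)) * φ s := by
      simp only [hh]; field_simp; ring
    rw [h3]; linarith
  · have hi := fun a b => hhc.intervalIntegrable (μ := volume) a b
    rw [← intervalIntegral.integral_add_adjacent_intervals (hi 0 s0) (hi s0 1)]
    have e1 : ∫ s in (0:ℝ)..s0, h s = - (P s0 * φ s0) - -(P 0 * φ 0) := by
      refine intervalIntegral.integral_eq_sub_of_hasDerivAt_of_le (f := fun s => -(P s * φ s)) hs0.le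
        (by fun_prop) (fun s hs => ?_) (hi _ _)
      have := ((hPd s hs).mul (hφd s)).neg
      refine HasDerivAt.congr_deriv this ?_
      have hc1 := hcle s ⟨hs.1.le, hs.2.le⟩
      have := hPpos s
      simp only [hh, hκ, hg, hc1, min_self]
      field_simp; ring
    have e2 : ∫ s in s0..(1:ℝ), (-|c|) ≤ ∫ s in s0..1, h s := by
      refine intervalIntegral.integral_mono_on hs1.le (by simp) (hi _ _) fun s hs => ?_
      have hs' : s ∈ Icc (0:ℝ) 1 := ⟨hs0.le.trans hs.1, hs.2⟩
      have hκn : 0 ≤ κ s := le_min (hfn s hs') (hfn _ (hclm s))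
      have : 0 ≤ κ s * φ s / P s := div_nonneg (mul_nonneg hκn (hφpos s).le) (hPpos s).le
      have h1 := hφ1 s hs'.1
      have h2 := hφpos s
      have h3 := neg_abs_le c
      have h4 := abs_nonneg c
      simp only [hh]
      nlinarith
    rw [intervalIntegral.integral_const, smul_eq_mul] at e2
    rw [hφ0] at e1
    have h1 := mul_le_mul_of_nonneg_left (hφ1 s0 hs0.le) (hPpos s0).le
    linarith

lemma aux_2d (f : ℝ → ℝ) (c : ℝ) (φ φ' h : ℝ → ℝ)
    (hφd : ∀ s, HasDerivAt φ (φ' s) s) (hφ'c : Continuous φ') (hhc : Continuous h)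
    (hφ : ∀ s ∈ Icc (0:ℝ) 1, 0 ≤ φ s ∧ φ s ≤ 1)
    (hin : ∀ s ∈ Icc (0:ℝ) 1, ∀ a b : ℝ,
        (h s - c * φ s) * a ≤ f s * φ s - φ' s * (a * a + b * b))
    (u z : ℝ → ℝ → ℝ)
    (hu : ContDiff ℝ 2 (Function.uncurry u))
    (hz : Continuous (Function.uncurry z))
    (hznonneg : ∀ x₁ x₂, 0 ≤ z x₁ x₂)
    (hurange : ∀ x₁ x₂, u x₁ x₂ ∈ Icc (0:ℝ) 1)
    (hpde : ∀ x₁ : ℝ, ∀ x₂ ∈ Icc (0:ℝ) 1,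
      f (u x₁ x₂) + c * deriv (fun t => u t x₂) x₁
        + (deriv (deriv (fun t => u t x₂)) x₁ + deriv (deriv (u x₁)) x₂)
        - z x₁ x₂ = 0)
    (hneumann : ∀ x₁ : ℝ, deriv (u x₁) 0 = 0 ∧ deriv (u x₁) 1 = 0)
    (hlim0 : ∀ ε > (0:ℝ), ∃ M : ℝ, ∀ x₁ ≤ -M, ∀ x₂ ∈ Icc (0:ℝ) 1, u x₁ x₂ ≤ ε)
    (hlim1 : ∀ ε > (0:ℝ), ∃ M : ℝ, ∀ x₁ ≥ M, ∀ x₂ ∈ Icc (0:ℝ) 1, 1 - ε ≤ u x₁ x₂)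
    (hgrad : ∀ ε > (0:ℝ), ∃ M : ℝ, ∀ x₁ : ℝ, M ≤ |x₁| → ∀ x₂ ∈ Icc (0:ℝ) 1,
      |deriv (fun t => u t x₂) x₁| ≤ ε ∧ |deriv (u x₁) x₂| ≤ ε)
    (hzint : IntegrableOn (fun p : ℝ × ℝ => z p.1 p.2) (univ ×ˢ Icc (0:ℝ) 1)) :
    ∫ s in (0:ℝ)..1, h s ≤ ∫ p in univ ×ˢ Icc (0:ℝ) 1, z p.1 p.2 := by
  set Uu := Function.uncurry u with hUu
  have hDU : ContDiff ℝ 1 (fderiv ℝ Uu) := hu.fderiv_right (by norm_num)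
  have hUdiff : Differentiable ℝ Uu := hu.differentiable (by norm_num)
  set ux : ℝ × ℝ → ℝ := fun p => fderiv ℝ Uu p (1, 0) with hux
  set uy : ℝ × ℝ → ℝ := fun p => fderiv ℝ Uu p (0, 1) with huy
  have huxC : ContDiff ℝ 1 ux := hDU.clm_apply contDiff_const
  have huyC : ContDiff ℝ 1 uy := hDU.clm_apply contDiff_const
  have hl1 : ∀ x y : ℝ, HasDerivAt (fun t : ℝ => (t, y)) ((1:ℝ), (0:ℝ)) x := fun x y =>
    (hasDerivAt_id x).prodMk (hasDerivAt_const x y)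
  have hl2 : ∀ x y : ℝ, HasDerivAt (fun t : ℝ => (x, t)) ((0:ℝ), (1:ℝ)) y := fun x y =>
    (hasDerivAt_const y x).prodMk (hasDerivAt_id y)
  have hdx : ∀ x y, HasDerivAt (fun t => u t y) (ux (x, y)) x := fun x y => by
    have := (hUdiff (x, y)).hasFDerivAt.comp_hasDerivAt x (hl1 x y)
    exact this
  have hdy : ∀ x y, HasDerivAt (u x) (uy (x, y)) y := fun x y =>
    (hUdiff (x, y)).hasFDerivAt.comp_hasDerivAt y (hl2 x y)
  have hdx' : ∀ y, deriv (fun t => u t y) = fun t => ux (t, y) := fun y =>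
    funext fun x => (hdx x y).deriv
  have hdy' : ∀ x, deriv (u x) = fun t => uy (x, t) := fun x => funext fun y => (hdy x y).deriv
  have hdxx : ∀ x y, HasDerivAt (fun t => ux (t, y)) (deriv (deriv (fun t => u t y)) x) x := by
    intro x y
    have := ((huxC.differentiable (by norm_num)) (x, y)).hasFDerivAt.comp_hasDerivAt x (hl1 x y)
    rw [hdx' y]
    exact this.differentiableAt.hasDerivAt
  have hdyy : ∀ x y, HasDerivAt (fun t => uy (x, t)) (deriv (deriv (u x)) y) y := by
    intro x y
    have := ((huyC.differentiable (by norm_num)) (x, y)).hasFDerivAt.comp_hasDerivAt y (hl2 x y)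
    rw [hdy' x]
    exact this.differentiableAt.hasDerivAt
  set Ψ : ℝ → ℝ := fun s => ∫ t in (0:ℝ)..s, h t with hΨ
  have hΨd : ∀ s, HasDerivAt Ψ (h s) s := fun s => (hhc.integral_hasStrictDerivAt 0 s).hasDerivAt
  have C1 : ∀ (g g' : ℝ → ℝ), (∀ s, HasDerivAt g (g' s) s) → Continuous g' → ContDiff ℝ 1 g := by
    intro g g' hg hg'
    rw [contDiff_one_iff_deriv]
    refine ⟨fun s => (hg s).differentiableAt, ?_⟩
    rwa [show deriv g = g' from funext fun s => (hg s).deriv]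
  have hφC := C1 φ φ' hφd hφ'c
  have hΨC := C1 Ψ h hΨd hhc
  have hU1 : ContDiff ℝ 1 Uu := hu.of_le (by norm_num)
  set F : ℝ × ℝ → ℝ := fun p => φ (Uu p) * ux p + Ψ (Uu p) with hF
  set G : ℝ × ℝ → ℝ := fun p => φ (Uu p) * uy p with hG
  have hFC : ContDiff ℝ 1 F := ((hφC.comp hU1).mul huxC).add (hΨC.comp hU1)
  have hGC : ContDiff ℝ 1 G := (hφC.comp hU1).mul huyC
  have hFd : Differentiable ℝ F := hFC.differentiable (by norm_num)
  have hGd : Differentiable ℝ G := hGC.differentiable (by norm_num)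
  have hFx : ∀ x y, fderiv ℝ F (x, y) (1, 0) = φ' (u x y) * ux (x, y) * ux (x, y)
      + φ (u x y) * deriv (deriv (fun t => u t y)) x + h (u x y) * ux (x, y) := by
    intro x y
    have h1 : HasDerivAt (fun t => F (t, y)) (fderiv ℝ F (x, y) (1, 0)) x := by
      have := (hFd (x, y)).hasFDerivAt.comp_hasDerivAt x (hl1 x y)
      exact this
    have h2 := (((hφd (u x y)).comp x (hdx x y)).mul (hdxx x y)).add ((hΨd (u x y)).comp x (hdx x y))
    exact h1.unique h2
  have hGy : ∀ x y, fderiv ℝ G (x, y) (0, 1) = φ' (u x y) * uy (x, y) * uy (x, y)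
      + φ (u x y) * deriv (deriv (u x)) y := by
    intro x y
    have h1 : HasDerivAt (fun t => G (x, t)) (fderiv ℝ G (x, y) (0, 1)) y :=
      (hGd (x, y)).hasFDerivAt.comp_hasDerivAt y (hl2 x y)
    have h2 : HasDerivAt (fun t => φ (u x t) * uy (x, t)) _ y :=
      (((hφd (u x y)).comp y (hdy x y)).mul (hdyy x y))
    exact h1.unique h2
  set D : ℝ × ℝ → ℝ := fun p => fderiv ℝ F p (1, 0) + fderiv ℝ G p (0, 1) with hD
  have hDc : Continuous D := by
    have a1 := hFC.continuous_fderiv (by norm_num)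
    have a2 := hGC.continuous_fderiv (by norm_num)
    exact (a1.clm_apply continuous_const).add (a2.clm_apply continuous_const)
  -- pointwise inequality
  have hpt : ∀ x, ∀ y ∈ Icc (0:ℝ) 1, D (x, y) ≤ z x y := by
    intro x y hy
    have e1 := hpde x y hy
    rw [(hdx x y).deriv] at e1
    have e2 := hin (u x y) (hurange x y) (ux (x, y)) (uy (x, y))
    have e3 := hφ (u x y) (hurange x y)
    simp only [hD]
    rw [hFx, hGy]
    have e4 : φ (u x y) * z x y ≤ z x y := mul_le_of_le_one_left (hznonneg x y) e3.2
    have e5 : z x y = f (u x y) + c * ux (x, y) + (deriv (deriv fun t => u t y) x +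
      deriv (deriv (u x)) y) := by linarith
    have e6 : φ (u x y) * z x y = φ (u x y) * (f (u x y) + c * ux (x, y) +
      (deriv (deriv fun t => u t y) x + deriv (deriv (u x)) y)) := by rw [← e5]
    linarith
  have hzint' : ∀ R : ℝ, IntegrableOn (fun p : ℝ × ℝ => z p.1 p.2) (Icc (-R) R ×ˢ Icc (0:ℝ) 1) :=
    fun R => hzint.mono_set (prod_mono (subset_univ _) le_rfl)
  -- rectangle
  have hrect : ∀ R : ℝ, 0 < R → (∫ y in (0:ℝ)..1, F (R, y)) - (∫ y in (0:ℝ)..1, F (-R, y)) ≤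
      ∫ p in univ ×ˢ Icc (0:ℝ) 1, z p.1 p.2 := by
    intro R hR
    have hRR : -R ≤ R := by linarith
    have hDi : IntegrableOn D (Icc (-R) R ×ˢ Icc (0:ℝ) 1) :=
      hDc.continuousOn.integrableOn_compact (isCompact_Icc.prod isCompact_Icc)
    have key := integral2_divergence_prod_of_hasFDerivAt F G (fderiv ℝ F) (fderiv ℝ G) (-R) 0 R 1
      hFC.continuous.continuousOn hGC.continuous.continuousOn
      (fun p _ => (hFd p).hasFDerivAt) (fun p _ => (hGd p).hasFDerivAt)
      (by rw [uIcc_of_le hRR, uIcc_of_le zero_le_one]; exact hDi)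
    have g0 : ∀ x, G (x, 0) = 0 := fun x => by
      have := (hneumann x).1; rw [(hdy x 0).deriv] at this; simp [hG, this]
    have g1 : ∀ x, G (x, 1) = 0 := fun x => by
      have := (hneumann x).2; rw [(hdy x 1).deriv] at this; simp [hG, this]
    simp only [g0, g1, intervalIntegral.integral_zero, sub_zero, zero_add] at key
    rw [← key]
    have e1 : ∫ x in (-R)..R, ∫ y in (0:ℝ)..1, fderiv ℝ F (x, y) (1, 0) + fderiv ℝ G (x, y) (0, 1)
        = ∫ p in Icc (-R) R ×ˢ Icc (0:ℝ) 1, D p := by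
      rw [Measure.volume_eq_prod, setIntegral_prod _ (by rwa [← Measure.volume_eq_prod]),
        intervalIntegral.integral_of_le hRR, ← integral_Icc_eq_integral_Ioc]
      simp only [intervalIntegral.integral_of_le zero_le_one, ← integral_Icc_eq_integral_Ioc]
      rfl
    rw [e1]
    calc ∫ p in Icc (-R) R ×ˢ Icc (0:ℝ) 1, D p
        ≤ ∫ p in Icc (-R) R ×ˢ Icc (0:ℝ) 1, z p.1 p.2 := by
          refine setIntegral_mono_on hDi (hzint' R) (measurableSet_Icc.prod measurableSet_Icc) ?_
          rintro ⟨x, y⟩ hp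
          exact hpt x y hp.2
      _ ≤ _ := by
          refine setIntegral_mono_set hzint (ae_of_all _ fun p => hznonneg _ _) ?_
          exact (prod_mono (subset_univ _) le_rfl).eventuallyLE
  -- limits
  have hΨ0 : Ψ 0 = 0 := by simp [hΨ]
  have hΨc : Continuous Ψ := hΨC.continuous
  have hFR : ∀ x, Continuous fun y => F (x, y) := fun x =>
    hFC.continuous.comp (by fun_prop)
  refine le_of_forall_pos_le_add fun ε hε => ?_
  obtain ⟨δ0, hδ0, H0⟩ := Metric.continuousAt_iff.1 (hΨc.continuousAt (x := 0)) (ε/4) (by linarith)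
  obtain ⟨δ1, hδ1, H1⟩ := Metric.continuousAt_iff.1 (hΨc.continuousAt (x := 1)) (ε/4) (by linarith)
  obtain ⟨M0, hM0⟩ := hlim0 (δ0/2) (by linarith)
  obtain ⟨M1, hM1⟩ := hlim1 (δ1/2) (by linarith)
  obtain ⟨M2, hM2⟩ := hgrad (ε/4) (by linarith)
  set R := max 1 (max M0 (max M1 M2)) with hR
  have r0 : 1 ≤ R := le_max_left _ _
  have r1 : M0 ≤ R := (le_max_left _ _).trans (le_max_right _ _)
  have r2 : M1 ≤ R := (le_max_left _ _).trans ((le_max_right _ _).trans (le_max_right _ _))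
  have r3 : M2 ≤ R := (le_max_right _ _).trans ((le_max_right _ _).trans (le_max_right _ _))
  have hgr : ∀ x, |x| = R → ∀ y ∈ Icc (0:ℝ) 1, |φ (u x y) * ux (x, y)| ≤ ε/4 := by
    intro x hx y hy
    have e1 := (hM2 x (by rw [hx]; exact r3) y hy).1
    rw [(hdx x y).deriv] at e1
    have e3 := hφ (u x y) (hurange x y)
    rw [abs_mul, abs_of_nonneg e3.1]
    exact (mul_le_of_le_one_left (abs_nonneg _) e3.2).trans e1
  have A1 : Ψ 1 - ε/2 ≤ ∫ y in (0:ℝ)..1, F (R, y) := by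
    have : ∫ y in (0:ℝ)..1, (Ψ 1 - ε/2) ≤ ∫ y in (0:ℝ)..1, F (R, y) := by
      refine intervalIntegral.integral_mono_on zero_le_one (by simp)
        ((hFR R).intervalIntegrable _ _) fun y hy => ?_
      have a1 := (abs_le.1 (hgr R (abs_of_pos (by linarith)) y hy)).1
      have a2 := hM1 R r2 y hy
      have a3 := H1 (x := u R y) (by
        rw [Real.dist_eq, abs_lt]; have := (hurange R y).2; constructor <;> linarith)
      rw [Real.dist_eq, abs_lt] at a3
      have : F (R, y) = φ (u R y) * ux (R, y) + Ψ (u R y) := rfl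
      rw [this]; linarith [a3.1]
    simpa using this
  have A0 : ∫ y in (0:ℝ)..1, F (-R, y) ≤ ε/2 := by
    have : ∫ y in (0:ℝ)..1, F (-R, y) ≤ ∫ y in (0:ℝ)..1, (ε/2) := by
      refine intervalIntegral.integral_mono_on zero_le_one 
        ((hFR (-R)).intervalIntegrable _ _) (by simp) fun y hy => ?_
      have a1 := (abs_le.1 (hgr (-R) (by rw [abs_neg, abs_of_pos (by linarith)]) y hy)).2
      have a2 := hM0 (-R) (by linarith) y hy
      have a3 := H0 (x := u (-R) y) (by
        rw [Real.dist_eq, abs_lt]; have := (hurange (-R) y).1; constructor <;> linarith)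
      rw [Real.dist_eq, abs_lt, hΨ0] at a3
      have : F (-R, y) = φ (u (-R) y) * ux (-R, y) + Ψ (u (-R) y) := rfl
      rw [this]; linarith [a3.2]
    simpa using this
  have := hrect R (by linarith)
  change Ψ 1 ≤ _
  linarith

/-- monostable case. Any controlled traveling profile on the
2-dimensional strip `ℝ × [0,1]` with speed `c` requires a control effort at least
equal to the 1-dimensional minimal cost `C_min = U₀'(0+)`. -/
theorem two_dim_cost_lower_bound
    (f : ℝ → ℝ) (hf : ContDiff ℝ 2 f) (hf0 : f 0 = 0) (hf1 : f 1 = 0)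
    (hf'' : ∀ v ∈ Icc (0:ℝ) 1, deriv (deriv f) v < 0)
    (cstar : ℝ) (hchar : ∀ c', (∃ U, IsTravelingProfile f c' U) ↔ c' ≤ cstar)
    (c : ℝ) (hc : cstar < c)
    -- the optimal 1-d controlled profile `U₀` and its cost `Cmin = U₀'(0+)`
    (U₀ : ℝ → ℝ) (Cmin : ℝ)
    (hU₀cont : Continuous U₀) (hU₀mono : Monotone U₀)
    (hU₀range : ∀ x, U₀ x ∈ Icc (0:ℝ) 1)
    (hU₀zero : ∀ x ≤ (0:ℝ), U₀ x = 0)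
    (hU₀smooth : ContDiffOn ℝ 2 U₀ (Ioi 0))
    (hU₀ode : ∀ x > (0:ℝ), deriv (deriv U₀) x + c * deriv U₀ x + f (U₀ x) = 0)
    (hU₀top : Tendsto U₀ atTop (nhds 1))
    (hCmin : HasDerivWithinAt U₀ Cmin (Ioi 0) 0) (hCminpos : 0 < Cmin)
    -- a controlled 2-d traveling profile `u` with control `z ≥ 0` on the strip
    (u z : ℝ → ℝ → ℝ)
    (hu : ContDiff ℝ 2 (Function.uncurry u))
    (hz : Continuous (Function.uncurry z))
    (hznonneg : ∀ x₁ x₂, 0 ≤ z x₁ x₂)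
    (hurange : ∀ x₁ x₂, u x₁ x₂ ∈ Icc (0:ℝ) 1)
    (hpde : ∀ x₁ : ℝ, ∀ x₂ ∈ Icc (0:ℝ) 1,
      f (u x₁ x₂) + c * deriv (fun t => u t x₂) x₁
        + (deriv (deriv (fun t => u t x₂)) x₁ + deriv (deriv (u x₁)) x₂)
        - z x₁ x₂ = 0)
    (hneumann : ∀ x₁ : ℝ, deriv (u x₁) 0 = 0 ∧ deriv (u x₁) 1 = 0)
    (hlim0 : ∀ ε > (0:ℝ), ∃ M : ℝ, ∀ x₁ ≤ -M, ∀ x₂ ∈ Icc (0:ℝ) 1, u x₁ x₂ ≤ ε)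
    (hlim1 : ∀ ε > (0:ℝ), ∃ M : ℝ, ∀ x₁ ≥ M, ∀ x₂ ∈ Icc (0:ℝ) 1, 1 - ε ≤ u x₁ x₂)
    (hgrad : ∀ ε > (0:ℝ), ∃ M : ℝ, ∀ x₁ : ℝ, M ≤ |x₁| → ∀ x₂ ∈ Icc (0:ℝ) 1,
      |deriv (fun t => u t x₂) x₁| ≤ ε ∧ |deriv (u x₁) x₂| ≤ ε)
    (hzint : IntegrableOn (fun p : ℝ × ℝ => z p.1 p.2) (univ ×ˢ Icc (0:ℝ) 1))
    (hfint : IntegrableOn (fun p : ℝ × ℝ => f (u p.1 p.2)) (univ ×ˢ Icc (0:ℝ) 1)) :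
    Cmin ≤ ∫ p in univ ×ˢ Icc (0:ℝ) 1, z p.1 p.2 := by
  have hfc : Continuous f := hf.continuous
  have hconc : StrictConcaveOn ℝ (Icc (0:ℝ) 1) f := by
    refine strictConcaveOn_of_deriv2_neg (convex_Icc 0 1) hfc.continuousOn fun x hx => ?_
    exact hf'' x (interior_subset hx)
  have hfpos : ∀ s ∈ Ioo (0:ℝ) 1, 0 < f s := by
    intro s hs
    have := hconc.2 (left_mem_Icc.2 zero_le_one) (right_mem_Icc.2 zero_le_one) zero_ne_one
      (show 0 < 1 - s by linarith [hs.2]) hs.1 (by ring)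
    simpa [hf0, hf1] using this
  have hfn : ∀ s ∈ Icc (0:ℝ) 1, 0 ≤ f s := by
    intro s hs
    rcases hs.1.eq_or_lt with h | h
    · rw [← h, hf0]
    rcases hs.2.eq_or_lt with h' | h'
    · rw [h', hf1]
    exact (hfpos s ⟨h, h'⟩).le
  obtain ⟨q, hqc, hq0, hUq, hqq⟩ :=
    aux_q f hfc c U₀ Cmin hU₀cont hU₀zero hU₀smooth hU₀ode hCmin
  have main : ∀ ε > 0, Cmin - ε - |c| * ε ≤ ∫ p in univ ×ˢ Icc (0:ℝ) 1, z p.1 p.2 := by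
    intro ε hε
    obtain ⟨y0, hy0, h1, h2, h3⟩ :=
      aux_y0 U₀ hU₀cont hU₀range hU₀zero hU₀top q hqc hUq ε hε
    have hqpos := aux_qpos f c U₀ Cmin hfpos hU₀mono hU₀zero hCmin hCminpos q hq0 hUq hqq y0 h2
    obtain ⟨hs0, P, hPc, hPpos, hP0, hP1, hPd⟩ :=
      aux_P f c U₀ hU₀cont (hU₀zero 0 le_rfl) q hqc hUq hqq y0 hy0 hqpos
    obtain ⟨φ, φ', h, hφd, hφ'c, hhc, hφ, hin, hint⟩ :=
      aux_phi f hfc c (U₀ y0) hs0 h2 hfn P hPc hPpos hPd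
    have := aux_2d f c φ φ' h hφd hφ'c hhc hφ hin u z hu hz hznonneg hurange hpde hneumann
      hlim0 hlim1 hgrad hzint
    rw [hP0, hP1, hq0] at hint
    have h4 : |c| * (1 - U₀ y0) ≤ |c| * ε :=
      mul_le_mul_of_nonneg_left (by linarith) (abs_nonneg c)
    linarith
  refine le_of_forall_pos_le_add fun ε hε => ?_
  have hpos : 0 < 1 + |c| := by positivity
  have := main (ε / (1 + |c|)) (by positivity)
  have h5 : ε / (1 + |c|) + |c| * (ε / (1 + |c|)) = ε := by field_simp
  linarith
end
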